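/- On an open subset of ℝ³ with coordinates (x¹, x², x³) = (x¹, x², φ), let the metric be g_{ab} = g̃_{ab}(x¹,x²) for a,b ∈ {1,2}, g_{a3} = g_{3a} = 0, g_{33} = α(x¹,x²)², where (g̃_{ab}) is a smooth positive-definite 2×2 matrix-valued function and α > 0 is smooth, both independent of φ. Let ω = ω(x¹,x²) be smooth and independent of φ, and define the symmetric tensor field T by T^{ab} = 0, T^{33} = 0, and T^{a3} = T^{3a} = α^{−3}(det g̃)^{−1/2} ε^{ab} ∂_b ω for a ∈ {1,2}, where ε^{12} = −ε^{21} = 1, ε^{11} = ε^{22} = 0. Then T is trace-free, g_{ij}T^{ij} = 0, and T satisfies the momentum constraint ∇_j T^{ij} = 0 for i = 1,2,3. -/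

import Mathlib

open Matrix

noncomputable section

abbrev V3 := Fin 3 → ℝ

/-- Partial derivative `∂ᵢ f` on `ℝ³`. -/
def pd (i : Fin 3) (f : V3 → ℝ) (x : V3) : ℝ := fderiv ℝ f x (Pi.single i 1)

/-- Christoffel symbols `Γ^i_{jk} = (1/2) g^{il}(∂_j g_{lk} + ∂_k g_{jl} - ∂_l g_{jk})`. -/
def christoffel (g : V3 → Matrix (Fin 3) (Fin 3) ℝ) (i j k : Fin 3) (x : V3) : ℝ :=
  (1 / 2) * ∑ l, (g x)⁻¹ i l *
    (pd j (fun y => g y l k) x + pd k (fun y => g y j l) x - pd l (fun y => g y j k) x)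

/-- `|g| = (det g)^{1/2}`. -/
def sqrtDet (g : V3 → Matrix (Fin 3) (Fin 3) ℝ) (x : V3) : ℝ := Real.sqrt (g x).det

/-- Covariant divergence of a contravariant symmetric 2-tensor:
`∇_j T^{ij} = |g|⁻¹ ∂_j(|g| T^{ij}) + Γ^i_{jk} T^{jk}`. -/
def covDivUp (g T : V3 → Matrix (Fin 3) (Fin 3) ℝ) (i : Fin 3) (x : V3) : ℝ :=
  (sqrtDet g x)⁻¹ * (∑ j, pd j (fun y => sqrtDet g y * T y i j) x) +
    ∑ j, ∑ k, christoffel g i j k x * T x j k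

/-- Covariant divergence in mixed form, for a contravariant tensor `T^{ij}`:
`∇_j T_i^{ j} = |g|⁻¹ ∂_j(|g| g_{ik} T^{kj}) - (1/2) T^{jk} ∂_i g_{jk}`. -/
def covDivLow (g T : V3 → Matrix (Fin 3) (Fin 3) ℝ) (i : Fin 3) (x : V3) : ℝ :=
  (sqrtDet g x)⁻¹ * (∑ j, pd j (fun y => sqrtDet g y * (∑ k, g y i k * T y k j)) x) -
    (1 / 2) * ∑ j, ∑ k, T x j k * pd i (fun y => g y j k) x

/-!
For a symmetric tensor, `∇_j T_i^j = g_{ik} ∇_j T^{kj}`, so the constraint may be checked in the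
mixed form. There the term `T^{jk} ∂_i g_{jk}` drops out, because `g` and `T` have complementary
nonzero components, and `∂_φ` kills every `φ`-independent density. Of the flux `|g| T_i^a` with
`a ∈ {1, 2}` only the `i = 3` part is nonzero: the factor `α⁻³ (det g̃)^{-1/2}` is chosen so that
`|g| T_3^a = ε^{ab} ∂_b ω`, and its divergence vanishes because partial derivatives commute.
-/

open Filter Topology

section PartialDerivatives

variable {f h : V3 → ℝ} {x : V3} {i j : Fin 3}

lemma pd_congr_of_eventuallyEq (e : f =ᶠ[𝓝 x] h) : pd i f x = pd i h x := by
  simp only [pd, e.fderiv_eq]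

lemma pd_const (i : Fin 3) (r : ℝ) (x : V3) : pd i (fun _ => r) x = 0 := by
  simp [pd]

lemma pd_neg (i : Fin 3) (f : V3 → ℝ) (x : V3) : pd i (fun y => -f y) x = -pd i f x := by
  simp [pd, fderiv_fun_neg]

lemma pd_sum {ι : Type*} {s : Finset ι} {F : ι → V3 → ℝ}
    (hF : ∀ k ∈ s, DifferentiableAt ℝ (F k) x) :
    pd i (fun y => ∑ k ∈ s, F k y) x = ∑ k ∈ s, pd i (F k) x := by
  simp [pd, fderiv_fun_sum hF]

lemma pd_mul (hf : DifferentiableAt ℝ f x) (hh : DifferentiableAt ℝ h x) :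
    pd i (fun y => f y * h y) x = f x * pd i h x + h x * pd i f x := by
  simp [pd, fderiv_fun_mul hf hh]

lemma pd_comp {u : ℝ → ℝ} (hu : DifferentiableAt ℝ u (f x)) (hf : DifferentiableAt ℝ f x) :
    pd i (fun y => u (f y)) x = deriv u (f x) * pd i f x := by
  change fderiv ℝ (u ∘ f) x _ = _
  rw [(hu.hasDerivAt.comp_hasFDerivAt x hf.hasFDerivAt).fderiv]
  rfl

lemma pd_eq_zero_of_update (hf : DifferentiableAt ℝ f x)
    (hind : ∀ t, f (Function.update x i t) = f x) : pd i f x = 0 := by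
  have hf' : HasFDerivAt f (fderiv ℝ f x) (Function.update x i (x i)) := by
    simpa using hf.hasFDerivAt
  have hline := hf'.comp_hasDerivAt (x i) (hasDerivAt_update x i (x i))
  have hconst : f ∘ Function.update x i = fun _ => f x := funext hind
  rw [hconst] at hline
  exact hline.unique (hasDerivAt_const _ _)

lemma differentiableAt_fderiv_of_contDiffAt_two (hf : ContDiffAt ℝ 2 f x) :
    DifferentiableAt ℝ (fderiv ℝ f) x :=
  (hf.fderiv_right (m := 1) (by norm_num)).differentiableAt one_ne_zero

lemma differentiableAt_pd (hf : ContDiffAt ℝ 2 f x) : DifferentiableAt ℝ (pd i f) x :=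
  (differentiableAt_fderiv_of_contDiffAt_two hf).clm_apply (differentiableAt_const _)

lemma pd_comm (hf : ContDiffAt ℝ 2 f x) : pd i (pd j f) x = pd j (pd i f) x := by
  have pd_pd (k l : Fin 3) :
      pd k (pd l f) x = fderiv ℝ (fderiv ℝ f) x (Pi.single k 1) (Pi.single l 1) := by
    have := (differentiableAt_fderiv_of_contDiffAt_two hf).hasFDerivAt.clm_apply
      (hasFDerivAt_const (Pi.single l 1 : V3) x)
    change fderiv ℝ (fun y => fderiv ℝ f y (Pi.single l 1)) x _ = _
    simp [this.fderiv]
  rw [pd_pd, pd_pd]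
  exact hf.isSymmSndFDerivAt (by simp) _ _

end PartialDerivatives

section CovariantDivergence

variable {g T : V3 → Matrix (Fin 3) (Fin 3) ℝ} {x : V3}

lemma sum_metric_mul_christoffel (hg : (g x).det ≠ 0) (i j k : Fin 3) :
    ∑ l, g x i l * christoffel g l j k x =
      (1 / 2) * (pd j (fun y => g y i k) x + pd k (fun y => g y j i) x
        - pd i (fun y => g y j k) x) := by
  set F : Fin 3 → ℝ := fun l =>
    pd j (fun y => g y l k) x + pd k (fun y => g y j l) x - pd l (fun y => g y j k) x
  have hΓ : (fun l => christoffel g l j k x) = (1 / 2 : ℝ) • ((g x)⁻¹ *ᵥ F) := rfl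
  calc ∑ l, g x i l * christoffel g l j k x
      = (g x *ᵥ fun l => christoffel g l j k x) i := rfl
    _ = (1 / 2) * F i := by
      rw [hΓ, mulVec_smul, mulVec_mulVec, mul_nonsing_inv _ hg.isUnit, one_mulVec]
      rfl

lemma sum_metric_mul_christoffel_mul (hg : (g x).det ≠ 0) (hgs : ∀ᶠ y in 𝓝 x, (g y).IsSymm)
    (hTs : (T x).IsSymm) (i : Fin 3) :
    ∑ l, g x i l * ∑ j, ∑ k, christoffel g l j k x * T x j k =
      ∑ j, ∑ k, T x k j * pd j (fun y => g y i k) x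
        - (1 / 2) * ∑ j, ∑ k, T x j k * pd i (fun y => g y j k) x := by
  have pd_symm (k j : Fin 3) : pd k (fun y => g y j i) x = pd k (fun y => g y i j) x :=
    pd_congr_of_eventuallyEq (hgs.mono fun y hy => hy.apply i j)
  have swap : ∑ j, ∑ k, T x j k * pd k (fun y => g y i j) x =
      ∑ j, ∑ k, T x k j * pd j (fun y => g y i k) x := Finset.sum_comm
  calc ∑ l, g x i l * ∑ j, ∑ k, christoffel g l j k x * T x j k
      = ∑ j, ∑ k, (∑ l, g x i l * christoffel g l j k x) * T x j k := by
        simp only [Finset.mul_sum, Finset.sum_mul, ← mul_assoc]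
        rw [Finset.sum_comm]
        exact Finset.sum_congr rfl fun j _ => Finset.sum_comm
    _ = ∑ j, ∑ k, ((1 / 2) * (T x k j * pd j (fun y => g y i k) x)
          + (1 / 2) * (T x j k * pd k (fun y => g y i j) x)
          - (1 / 2) * (T x j k * pd i (fun y => g y j k) x)) := by
        refine Finset.sum_congr rfl fun j _ => Finset.sum_congr rfl fun k _ => ?_
        rw [sum_metric_mul_christoffel hg, pd_symm, hTs.apply j k]
        ring
    _ = _ := by
        simp only [Finset.sum_sub_distrib, Finset.sum_add_distrib, ← Finset.mul_sum, swap]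
        ring

lemma covDivLow_eq_sum_metric_mul_covDivUp (hdet : 0 < (g x).det)
    (hg : ∀ i j, DifferentiableAt ℝ (fun y => g y i j) x)
    (hgs : ∀ᶠ y in 𝓝 x, (g y).IsSymm)
    (hT : ∀ i j, DifferentiableAt ℝ (fun y => sqrtDet g y * T y i j) x)
    (hTs : (T x).IsSymm) (i : Fin 3) :
    covDivLow g T i x = ∑ l, g x i l * covDivUp g T l x := by
  have hs : sqrtDet g x ≠ 0 := (Real.sqrt_pos.2 hdet).ne'
  have leibniz (j : Fin 3) : pd j (fun y => sqrtDet g y * ∑ k, g y i k * T y k j) x =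
      ∑ k, g x i k * pd j (fun y => sqrtDet g y * T y k j) x
        + sqrtDet g x * ∑ k, T x k j * pd j (fun y => g y i k) x := by
    simp only [Finset.mul_sum, mul_left_comm (sqrtDet g _) (g _ _ _)]
    rw [pd_sum fun k _ => (hg i k).fun_mul (hT k j), ← Finset.sum_add_distrib]
    exact Finset.sum_congr rfl fun k _ => by rw [pd_mul (hg i k) (hT k j)]; ring
  have lowered : ∑ l, g x i l * covDivUp g T l x =
      (sqrtDet g x)⁻¹ * ∑ j, ∑ k, g x i k * pd j (fun y => sqrtDet g y * T y k j) x
        + ∑ l, g x i l * ∑ j, ∑ k, christoffel g l j k x * T x j k := by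
    simp only [covDivUp, mul_add, Finset.sum_add_distrib]
    rw [Finset.sum_comm (s := Finset.univ) (t := Finset.univ)]
    simp only [Finset.mul_sum, mul_left_comm (g x i _) (sqrtDet g x)⁻¹]
  rw [lowered, sum_metric_mul_christoffel_mul hdet.ne' hgs hTs, covDivLow]
  simp only [leibniz, Finset.sum_add_distrib, ← Finset.mul_sum]
  field_simp
  ring

lemma covDivUp_eq_zero_iff_covDivLow_eq_zero (hdet : 0 < (g x).det)
    (hg : ∀ i j, DifferentiableAt ℝ (fun y => g y i j) x)
    (hgs : ∀ᶠ y in 𝓝 x, (g y).IsSymm)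
    (hT : ∀ i j, DifferentiableAt ℝ (fun y => sqrtDet g y * T y i j) x)
    (hTs : (T x).IsSymm) :
    (∀ i, covDivUp g T i x = 0) ↔ ∀ i, covDivLow g T i x = 0 := by
  have lower := covDivLow_eq_sum_metric_mul_covDivUp hdet hg hgs hT hTs
  refine ⟨fun h i => by simp [lower, h], fun h => ?_⟩
  exact congrFun (eq_zero_of_mulVec_eq_zero hdet.ne' (funext fun i => (lower i).symm.trans (h i)))

end CovariantDivergence

/-- First-order axial symmetry at a point: `∂_φ f = 0`, where `φ = x³` has index `2`.
Differentiability is included because `pd` is `0` at points where `f` is not differentiable. -/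
structure AxisymmetricAt (f : V3 → ℝ) (x : V3) : Prop where
  differentiableAt : DifferentiableAt ℝ f x
  pd_two_eq_zero : pd 2 f x = 0

namespace AxisymmetricAt

variable {f h : V3 → ℝ} {x : V3}

lemma of_update (hf : DifferentiableAt ℝ f x) (hind : ∀ t, f (Function.update x 2 t) = f x) :
    AxisymmetricAt f x :=
  ⟨hf, pd_eq_zero_of_update hf hind⟩

lemma const (r : ℝ) (x : V3) : AxisymmetricAt (fun _ => r) x :=
  ⟨differentiableAt_const r, pd_const 2 r x⟩

lemma mul (hf : AxisymmetricAt f x) (hh : AxisymmetricAt h x) :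
    AxisymmetricAt (fun y => f y * h y) x where
  differentiableAt := hf.differentiableAt.mul hh.differentiableAt
  pd_two_eq_zero := by
    simp [pd_mul hf.differentiableAt hh.differentiableAt, hf.pd_two_eq_zero, hh.pd_two_eq_zero]

lemma comp {u : ℝ → ℝ} (hu : DifferentiableAt ℝ u (f x)) (hf : AxisymmetricAt f x) :
    AxisymmetricAt (fun y => u (f y)) x where
  differentiableAt := hu.comp x hf.differentiableAt
  pd_two_eq_zero := by simp [pd_comp hu hf.differentiableAt, hf.pd_two_eq_zero]

lemma neg (hf : AxisymmetricAt f x) : AxisymmetricAt (fun y => -f y) x :=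
  comp differentiableAt_fun_id.neg hf

lemma pow (hf : AxisymmetricAt f x) (n : ℕ) : AxisymmetricAt (fun y => f y ^ n) x :=
  comp (differentiableAt_pow n) hf

lemma inv (hf : AxisymmetricAt f x) (h0 : f x ≠ 0) : AxisymmetricAt (fun y => (f y)⁻¹) x :=
  comp (differentiableAt_inv h0) hf

lemma sqrt (hf : AxisymmetricAt f x) (h0 : f x ≠ 0) : AxisymmetricAt (fun y => √(f y)) x :=
  comp (Real.hasDerivAt_sqrt h0).differentiableAt hf

lemma sum {ι : Type*} {s : Finset ι} {F : ι → V3 → ℝ} (hF : ∀ k ∈ s, AxisymmetricAt (F k) x) :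
    AxisymmetricAt (fun y => ∑ k ∈ s, F k y) x where
  differentiableAt := DifferentiableAt.fun_sum fun k hk => (hF k hk).differentiableAt
  pd_two_eq_zero := by
    rw [pd_sum fun k hk => (hF k hk).differentiableAt]
    exact Finset.sum_eq_zero fun k hk => (hF k hk).pd_two_eq_zero

lemma prod {ι : Type*} {s : Finset ι} {F : ι → V3 → ℝ} (hF : ∀ k ∈ s, AxisymmetricAt (F k) x) :
    AxisymmetricAt (fun y => ∏ k ∈ s, F k y) x := by
  classical
  induction s using Finset.induction_on with
  | empty => simpa using const 1 x
  | insert a s ha ih =>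
    simp only [Finset.prod_insert ha]
    rw [Finset.forall_mem_insert] at hF
    exact hF.1.mul (ih hF.2)

lemma det {n : Type*} [Fintype n] [DecidableEq n] {A : V3 → Matrix n n ℝ}
    (hA : ∀ a b, AxisymmetricAt (fun y => A y a b) x) :
    AxisymmetricAt (fun y => (A y).det) x := by
  simp only [det_apply']
  exact sum fun σ _ => (const _ x).mul (prod fun a _ => hA (σ a) a)

lemma sqrtDet {g : V3 → Matrix (Fin 3) (Fin 3) ℝ}
    (hg : ∀ i j, AxisymmetricAt (fun y => g y i j) x) (hdet : (g x).det ≠ 0) :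
    AxisymmetricAt (sqrtDet g) x :=
  (det hg).sqrt hdet

lemma partialDeriv (hf : ContDiffAt ℝ 2 f x) (h0 : ∀ᶠ y in 𝓝 x, pd 2 f y = 0) (i : Fin 3) :
    AxisymmetricAt (pd i f) x where
  differentiableAt := differentiableAt_pd hf
  pd_two_eq_zero := by
    rw [pd_comm hf, pd_congr_of_eventuallyEq h0, pd_const]

end AxisymmetricAt

section AxialFields

/-- The metric `g̃_{ab} dx^a dx^b + α² dφ²`. -/
def axialMetric (gt : V3 → Matrix (Fin 2) (Fin 2) ℝ) (α : V3 → ℝ) (x : V3) :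
    Matrix (Fin 3) (Fin 3) ℝ :=
  !![gt x 0 0, gt x 0 1, 0;
     gt x 1 0, gt x 1 1, 0;
     0, 0, (α x) ^ 2]

/-- The symmetric tensor with `T^{ab} = T^{33} = 0` (part of condition (45)), whose remaining
components are `T^{13} = p` and `T^{23} = q`. -/
def axialTensor (p q : V3 → ℝ) (x : V3) : Matrix (Fin 3) (Fin 3) ℝ :=
  !![0, 0, p x;
     0, 0, q x;
     p x, q x, 0]

variable {gt : V3 → Matrix (Fin 2) (Fin 2) ℝ} {α p q : V3 → ℝ} {x : V3}

lemma det_axialMetric (gt : V3 → Matrix (Fin 2) (Fin 2) ℝ) (α : V3 → ℝ) (x : V3) :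
    (axialMetric gt α x).det = α x ^ 2 * (gt x).det := by
  simp only [axialMetric, det_fin_three, det_fin_two, of_apply, cons_val]
  ring

lemma det_axialMetric_pos (hdet : 0 < (gt x).det) (hα : α x ≠ 0) :
    0 < (axialMetric gt α x).det := by
  rw [det_axialMetric]
  positivity

lemma isSymm_axialMetric (h : (gt x).IsSymm) : (axialMetric gt α x).IsSymm := by
  refine IsSymm.ext fun i j => ?_
  fin_cases i <;> fin_cases j <;> simp [axialMetric, h.apply 0 1]

lemma isSymm_axialTensor (p q : V3 → ℝ) (x : V3) : (axialTensor p q x).IsSymm := by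
  refine IsSymm.ext fun i j => ?_
  fin_cases i <;> fin_cases j <;> simp [axialTensor]

lemma AxisymmetricAt.axialMetric (hgt : ∀ a b, AxisymmetricAt (fun y => gt y a b) x)
    (hα : AxisymmetricAt α x) (i j : Fin 3) :
    AxisymmetricAt (fun y => axialMetric gt α y i j) x := by
  fin_cases i <;> fin_cases j <;> first | exact hgt _ _ | exact hα.pow 2 | exact const 0 x

lemma AxisymmetricAt.axialTensor (hp : AxisymmetricAt p x) (hq : AxisymmetricAt q x)
    (i j : Fin 3) : AxisymmetricAt (fun y => axialTensor p q y i j) x := by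
  fin_cases i <;> fin_cases j <;> first | exact hp | exact hq | exact const 0 x

lemma axialMetric_eq_zero_or_axialTensor_eq_zero (gt : V3 → Matrix (Fin 2) (Fin 2) ℝ)
    (α p q : V3 → ℝ) (i j : Fin 3) :
    (∀ y, axialMetric gt α y i j = 0) ∨ ∀ y, axialTensor p q y i j = 0 := by
  fin_cases i <;> fin_cases j <;> simp [axialMetric, axialTensor]

lemma sum_axialMetric_mul_axialTensor (gt : V3 → Matrix (Fin 2) (Fin 2) ℝ) (α p q : V3 → ℝ)
    (x : V3) :
    ∑ i, ∑ j, axialMetric gt α x i j * axialTensor p q x i j = 0 :=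
  Finset.sum_eq_zero fun i _ => Finset.sum_eq_zero fun j _ =>
    mul_eq_zero.2 <| (axialMetric_eq_zero_or_axialTensor_eq_zero gt α p q i j).imp
      (· x) (· x)

lemma sum_axialTensor_mul_pd_axialMetric (gt : V3 → Matrix (Fin 2) (Fin 2) ℝ)
    (α p q : V3 → ℝ) (i : Fin 3) (x : V3) :
    ∑ j, ∑ k, axialTensor p q x j k * pd i (fun y => axialMetric gt α y j k) x = 0 := by
  refine Finset.sum_eq_zero fun j _ => Finset.sum_eq_zero fun k _ => ?_
  rcases axialMetric_eq_zero_or_axialTensor_eq_zero gt α p q j k with hg | hT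
  · simp [hg, pd_const]
  · simp [hT]

lemma axialMetric_mul_axialTensor (gt : V3 → Matrix (Fin 2) (Fin 2) ℝ) (α p q : V3 → ℝ)
    (x : V3) :
    axialMetric gt α x * axialTensor p q x =
      !![0, 0, gt x 0 0 * p x + gt x 0 1 * q x;
         0, 0, gt x 1 0 * p x + gt x 1 1 * q x;
         α x ^ 2 * p x, α x ^ 2 * q x, 0] := by
  ext i j
  fin_cases i <;> fin_cases j <;> simp [axialMetric, axialTensor, mul_apply, Fin.sum_univ_three]

lemma covDivLow_axialTensor (hgt : ∀ a b, AxisymmetricAt (fun y => gt y a b) x)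
    (hα : AxisymmetricAt α x) (hT : ∀ i j, AxisymmetricAt (fun y => axialTensor p q y i j) x)
    (hdet : (axialMetric gt α x).det ≠ 0) (i : Fin 3) :
    covDivLow (axialMetric gt α) (axialTensor p q) i x =
      (sqrtDet (axialMetric gt α) x)⁻¹ *
        (pd 0 (fun y => sqrtDet (axialMetric gt α) y *
            (axialMetric gt α y * axialTensor p q y) i 0) x
          + pd 1 (fun y => sqrtDet (axialMetric gt α) y *
            (axialMetric gt α y * axialTensor p q y) i 1) x) := by
  have hg := AxisymmetricAt.axialMetric hgt hα
  have hφ : AxisymmetricAt (fun y => sqrtDet (axialMetric gt α) y *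
      ∑ k, axialMetric gt α y i k * axialTensor p q y k 2) x :=
    (AxisymmetricAt.sqrtDet hg hdet).mul
      (AxisymmetricAt.sum fun k _ => (hg i k).mul (hT k 2))
  rw [covDivLow, sum_axialTensor_mul_pd_axialMetric, mul_zero, sub_zero, Fin.sum_univ_three,
    hφ.pd_two_eq_zero, add_zero]
  rfl

end AxialFields

section Twist

/-- The factor `α⁻³ (det g̃)^{-1/2}` relating `T^{a3}` to `ε^{ab} ∂_b ω`. -/
def twistWeight (gt : V3 → Matrix (Fin 2) (Fin 2) ℝ) (α : V3 → ℝ) (x : V3) : ℝ :=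
  ((α x) ^ 3)⁻¹ * (√(gt x).det)⁻¹

/-- The tensor with `T^{ab} = T^{33} = 0` and `T_3^a = α⁻¹ η^{ab} ∂_b ω` (formula (28)),
written contravariantly. -/
def twistTensor (gt : V3 → Matrix (Fin 2) (Fin 2) ℝ) (α ω : V3 → ℝ) :
    V3 → Matrix (Fin 3) (Fin 3) ℝ :=
  axialTensor (fun y => twistWeight gt α y * pd 1 ω y) (fun y => -(twistWeight gt α y * pd 0 ω y))

variable {gt : V3 → Matrix (Fin 2) (Fin 2) ℝ} {α ω : V3 → ℝ} {x : V3}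

lemma AxisymmetricAt.twistWeight (hgt : ∀ a b, AxisymmetricAt (fun y => gt y a b) x)
    (hα : AxisymmetricAt α x) (hdet : 0 < (gt x).det) (hα0 : α x ≠ 0) :
    AxisymmetricAt (twistWeight gt α) x :=
  ((hα.pow 3).inv (pow_ne_zero 3 hα0)).mul
    (((AxisymmetricAt.det hgt).sqrt hdet.ne').inv (Real.sqrt_pos.2 hdet).ne')

lemma sqrtDet_axialMetric_mul_twistWeight (hdet : 0 < (gt x).det) (hα : 0 < α x) :
    sqrtDet (axialMetric gt α) x * (α x ^ 2 * twistWeight gt α x) = 1 := by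
  have hs : √(gt x).det ≠ 0 := (Real.sqrt_pos.2 hdet).ne'
  rw [sqrtDet, det_axialMetric, Real.sqrt_mul (sq_nonneg _), Real.sqrt_sq hα.le, twistWeight]
  field_simp

lemma sqrtDet_mul_axialMetric_mul_twistTensor_two (hdet : 0 < (gt x).det) (hα : 0 < α x) :
    sqrtDet (axialMetric gt α) x * (axialMetric gt α x * twistTensor gt α ω x) 2 0 = pd 1 ω x ∧
    sqrtDet (axialMetric gt α) x * (axialMetric gt α x * twistTensor gt α ω x) 2 1 =
      -pd 0 ω x := by
  have hw := sqrtDet_axialMetric_mul_twistWeight hdet hα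
  simp only [twistTensor, axialMetric_mul_axialTensor, of_apply, cons_val]
  constructor
  · linear_combination pd 1 ω x * hw
  · linear_combination -pd 0 ω x * hw

lemma AxisymmetricAt.twistTensor (hgt : ∀ a b, AxisymmetricAt (fun y => gt y a b) x)
    (hdet : 0 < (gt x).det) (hα : AxisymmetricAt α x) (hα0 : α x ≠ 0)
    (hω : ContDiffAt ℝ 2 ω x) (hω_axi : ∀ᶠ y in 𝓝 x, pd 2 ω y = 0) (i j : Fin 3) :
    AxisymmetricAt (fun y => twistTensor gt α ω y i j) x := by
  have hw := AxisymmetricAt.twistWeight hgt hα hdet hα0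
  exact AxisymmetricAt.axialTensor (hw.mul (partialDeriv hω hω_axi 1))
    (hw.mul (partialDeriv hω hω_axi 0)).neg i j

lemma covDivLow_twistTensor_eq_zero (hgt : ∀ a b, AxisymmetricAt (fun y => gt y a b) x)
    (hdet : ∀ᶠ y in 𝓝 x, 0 < (gt y).det)
    (hα : AxisymmetricAt α x) (hα_pos : ∀ᶠ y in 𝓝 x, 0 < α y)
    (hω : ContDiffAt ℝ 2 ω x) (hω_axi : ∀ᶠ y in 𝓝 x, pd 2 ω y = 0) (i : Fin 3) :
    covDivLow (axialMetric gt α) (twistTensor gt α ω) i x = 0 := by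
  have hT := AxisymmetricAt.twistTensor hgt hdet.self_of_nhds hα hα_pos.self_of_nhds.ne' hω hω_axi
  have hdet' := (det_axialMetric_pos hdet.self_of_nhds hα_pos.self_of_nhds.ne').ne'
  have current := (hdet.and hα_pos).mono fun y hy =>
    sqrtDet_mul_axialMetric_mul_twistTensor_two (ω := ω) hy.1 hy.2
  rw [twistTensor, covDivLow_axialTensor hgt hα hT hdet', ← twistTensor]
  fin_cases i
  · simp [twistTensor, axialMetric_mul_axialTensor, pd_const]
  · simp [twistTensor, axialMetric_mul_axialTensor, pd_const]
  · have h0 := pd_congr_of_eventuallyEq (i := 0) (current.mono fun _ hy => hy.1)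
    have h1 := pd_congr_of_eventuallyEq (i := 1) (current.mono fun _ hy => hy.2)
    simp only [Fin.reduceFinMk, h0, h1, pd_neg]
    rw [pd_comm hω, add_neg_cancel, mul_zero]

end Twist

theorem axially_symmetric_momentum_constraint_general
    {U : Set V3} (hU : IsOpen U)
    {gt : V3 → Matrix (Fin 2) (Fin 2) ℝ} {α ω : V3 → ℝ}
    (hgt : ∀ a b, ∀ x ∈ U, AxisymmetricAt (fun y => gt y a b) x)
    (hgt_symm : ∀ x ∈ U, (gt x).IsSymm) (hgt_det : ∀ x ∈ U, 0 < (gt x).det)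
    (hα : ∀ x ∈ U, AxisymmetricAt α x) (hα_pos : ∀ x ∈ U, 0 < α x)
    (hω : ContDiffOn ℝ 2 ω U) (hω_axi : ∀ x ∈ U, pd 2 ω x = 0) :
    (∀ x ∈ U, ∑ i, ∑ j, axialMetric gt α x i j * twistTensor gt α ω x i j = 0) ∧
    (∀ i, ∀ x ∈ U, covDivUp (axialMetric gt α) (twistTensor gt α ω) i x = 0) := by
  refine ⟨fun x _ => sum_axialMetric_mul_axialTensor gt α _ _ x, fun i x hx => ?_⟩
  have near {P : V3 → Prop} (hP : ∀ y ∈ U, P y) : ∀ᶠ y in 𝓝 x, P y :=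
    eventually_of_mem (hU.mem_nhds hx) hP
  have hgt_x := fun a b => hgt a b x hx
  have hω_x : ContDiffAt ℝ 2 ω x := hω.contDiffAt (hU.mem_nhds hx)
  have hdet := det_axialMetric_pos (hgt_det x hx) (hα_pos x hx).ne'
  have hg := AxisymmetricAt.axialMetric hgt_x (hα x hx)
  have hT := AxisymmetricAt.twistTensor hgt_x (hgt_det x hx) (hα x hx) (hα_pos x hx).ne' hω_x
    (near hω_axi)
  have hdensity := fun j k => (AxisymmetricAt.sqrtDet hg hdet.ne').mul (hT j k)
  refine (covDivUp_eq_zero_iff_covDivLow_eq_zero hdet (fun j k => (hg j k).differentiableAt)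
    (near fun y hy => isSymm_axialMetric (hgt_symm y hy))
    (fun j k => (hdensity j k).differentiableAt) (isSymm_axialTensor _ _ x)).2 ?_ i
  exact covDivLow_twistTensor_eq_zero hgt_x (near hgt_det) (hα x hx) (near hα_pos) hω_x
    (near hω_axi)

/-- **Axially symmetric solutions of Section 2 given by (45) and (28)** (containing the Kerr
data (8a)–(10a)): for the metric `g = g̃_{ab} dx^a dx^b + α² dφ²` with `g̃`, `α`, `ω`
independent of `φ = x³`, the tensor with `T^{ab} = T^{33} = 0` and
`T^{a3} = α⁻³ (det g̃)^{-1/2} ε^{ab} ∂_b ω` is trace-free and satisfies the momentum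
constraint `∇_j T^{ij} = 0`. -/
theorem axially_symmetric_momentum_constraint
    (U : Set V3) (hU : IsOpen U)
    (gt : V3 → Matrix (Fin 2) (Fin 2) ℝ) (α ω : V3 → ℝ)
    (hgt_smooth : ∀ a b, ContDiffOn ℝ (⊤ : ℕ∞) (fun x => gt x a b) U)
    (hgt_pos : ∀ x ∈ U, (gt x).PosDef)
    (hgt_ind : ∀ x t, gt (Function.update x 2 t) = gt x)
    (hα_smooth : ContDiffOn ℝ (⊤ : ℕ∞) α U) (hα_pos : ∀ x ∈ U, 0 < α x)
    (hα_ind : ∀ x t, α (Function.update x 2 t) = α x)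
    (hω_smooth : ContDiffOn ℝ (⊤ : ℕ∞) ω U)
    (hω_ind : ∀ x t, ω (Function.update x 2 t) = ω x) :
    let g : V3 → Matrix (Fin 3) (Fin 3) ℝ := fun x =>
      !![gt x 0 0, gt x 0 1, 0;
         gt x 1 0, gt x 1 1, 0;
         0, 0, (α x) ^ 2]
    let c : V3 → ℝ := fun x => ((α x) ^ 3)⁻¹ * (Real.sqrt (gt x).det)⁻¹
    let T : V3 → Matrix (Fin 3) (Fin 3) ℝ := fun x =>
      !![0, 0, c x * pd 1 ω x;
         0, 0, -(c x * pd 0 ω x);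
         c x * pd 1 ω x, -(c x * pd 0 ω x), 0]
    (∀ x ∈ U, ∑ i, ∑ j, g x i j * T x i j = 0) ∧
    (∀ i, ∀ x ∈ U, covDivUp g T i x = 0) := by
  have differentiableAt_of_smooth {f : V3 → ℝ} (hf : ContDiffOn ℝ (⊤ : ℕ∞) f U) {x : V3}
      (hx : x ∈ U) : DifferentiableAt ℝ f x :=
    (hf.differentiableOn (by simp)).differentiableAt (hU.mem_nhds hx)
  exact axially_symmetric_momentum_constraint_general hU
    (fun a b x hx => .of_update (differentiableAt_of_smooth (hgt_smooth a b) hx)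
      fun t => by rw [hgt_ind])
    (fun x hx => isHermitian_iff_isSymm.1 (hgt_pos x hx).isHermitian)
    (fun x hx => (hgt_pos x hx).det_pos)
    (fun x hx => .of_update (differentiableAt_of_smooth hα_smooth hx) (hα_ind x))
    hα_pos
    (contDiffOn_infty.1 hω_smooth 2)
    (fun x hx => pd_eq_zero_of_update (differentiableAt_of_smooth hω_smooth hx) (hω_ind x))
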